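/- arXiv:1005.0731 — 4 statements merged into one kernel-verified Lean document; each statement's English description precedes it below -/
import Mathlib

section
/- Every metric space satisfying property (*) is locally pathwise connected as a topological space. -/
open Set Metric
open scoped ENNReal

/-- The length of a path `γ : [0,1] → X`, as the supremum over all partitions
`0 = t₀ < t₁ < ... < t_k = 1` of `Σ_i d(γ(t_i), γ(t_{i+1}))`. -/
noncomputable def pathLength {X : Type*} [MetricSpace X] (γ : ℝ → X) : ℝ≥0∞ :=
  eVariationOn γ (Set.Icc 0 1)

/-- Property (*): for every `x` there exist `ε > 0` and `C ≥ 1` such that any two points of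
the open ball `B_ε(x)` can be joined by a continuous path in `X` of length at most `C`
times their distance. -/
def PropertyStar (X : Type*) [MetricSpace X] : Prop :=
  ∀ x : X, ∃ ε > (0:ℝ), ∃ C : ℝ, 1 ≤ C ∧ ∀ y ∈ Metric.ball x ε, ∀ z ∈ Metric.ball x ε,
    ∃ γ : ℝ → X, ContinuousOn γ (Set.Icc 0 1) ∧ γ 0 = y ∧ γ 1 = z ∧
      pathLength γ ≤ ENNReal.ofReal (C * dist y z)

/-- The path connected component of `x` in `U`: points reachable from `x` by a continuous
path staying in `U`. -/
def pathCompIn {X : Type*} [TopologicalSpace X] (U : Set X) (x : X) : Set X :=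
  {y | y ∈ U ∧ ∃ γ : ℝ → X, ContinuousOn γ (Set.Icc 0 1) ∧
    Set.MapsTo γ (Set.Icc 0 1) U ∧ γ 0 = x ∧ γ 1 = y}

/-- Every metric space satisfying property (*) is locally pathwise connected:
the path connected component of any point of any open set is a neighbourhood of the point. -/
theorem propertyStar_locPathConnected {X : Type*} [MetricSpace X]
    (hX : PropertyStar X) :
    ∀ U : Set X, IsOpen U → ∀ x ∈ U, pathCompIn U x ∈ nhds x := by
  intro U hU x hx
  obtain ⟨r, hr, hrU⟩ := Metric.isOpen_iff.1 hU x hx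
  obtain ⟨ε, hε, C, hC, h⟩ := hX x
  have hC0 : 0 < C := by linarith
  refine Filter.mem_of_superset
    (Metric.ball_mem_nhds x (lt_min hε (div_pos hr hC0))) ?_
  intro y hy
  rw [Metric.mem_ball, lt_min_iff] at hy
  obtain ⟨hy1, hy2⟩ := hy
  obtain ⟨γ, hγ, h0, h1, hl⟩ := h x (Metric.mem_ball_self hε) y hy1
  have hlt : C * dist x y < r := by
    rw [lt_div_iff₀ hC0] at hy2
    rw [dist_comm, mul_comm]
    exact hy2
  have hm : Set.MapsTo γ (Set.Icc 0 1) U := by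
    intro t ht
    apply hrU
    have h2 : edist (γ t) (γ 0) ≤ ENNReal.ofReal (C * dist x y) :=
      (eVariationOn.edist_le γ ht (by simp)).trans hl
    rw [h0, edist_dist, ENNReal.ofReal_le_ofReal_iff (by positivity)] at h2
    exact Metric.mem_ball.2 (h2.trans_lt hlt)
  exact ⟨h1 ▸ hm (by simp), γ, hγ, hm, h0, h1⟩
end

section
/- Every compact metric space satisfying property (*) is locally quasiconvex. -/
open Set Metric
open scoped ENNReal

/-- A metric space is locally quasiconvex if every point has a quasiconvex neighbourhood `N`:
there is a constant `C` such that any two points of `N` can be joined by a continuous path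
lying in `N` of length at most `C` times their distance. -/
def IsLocQuasiconvex (X : Type*) [MetricSpace X] : Prop :=
  ∀ x : X, ∃ N ∈ nhds x, ∃ C : ℝ, ∀ y ∈ N, ∀ z ∈ N,
    ∃ γ : ℝ → X, ContinuousOn γ (Set.Icc 0 1) ∧ γ 0 = y ∧ γ 1 = z ∧
      Set.MapsTo γ (Set.Icc 0 1) N ∧ pathLength γ ≤ ENNReal.ofReal (C * dist y z)

/-- `y` and `z` are joined by a path of length at most `L`. -/
def JoinedLen {X : Type*} [MetricSpace X] (y z : X) (L : ℝ≥0∞) : Prop :=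
  ∃ γ : ℝ → X, ContinuousOn γ (Set.Icc 0 1) ∧ γ 0 = y ∧ γ 1 = z ∧ pathLength γ ≤ L

lemma JoinedLen.symm {X : Type*} [MetricSpace X] {y z : X} {L : ℝ≥0∞}
    (h : JoinedLen y z L) : JoinedLen z y L := by
  obtain ⟨γ, hc, h0, h1, hL⟩ := h
  have hm : MapsTo (fun t : ℝ => 1 - t) (Icc 0 1) (Icc 0 1) := by
    intro t ht
    exact ⟨by linarith [ht.2], by linarith [ht.1]⟩
  refine ⟨γ ∘ (fun t => 1 - t), hc.comp (by fun_prop) hm, by simp [h1], by simp [h0], ?_⟩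
  refine le_trans ?_ hL
  unfold pathLength
  apply eVariationOn.comp_le_of_antitoneOn _ _ _ hm
  intro a _ b _ hab
  exact sub_le_sub_left hab 1

lemma JoinedLen.trans {X : Type*} [MetricSpace X] {x y z : X} {L M : ℝ≥0∞}
    (h : JoinedLen x y L) (h' : JoinedLen y z M) : JoinedLen x z (L + M) := by
  obtain ⟨γ, hc, h0, h1, hL⟩ := h
  obtain ⟨δ, dc, d0, d1, dL⟩ := h'
  have e1 : EqOn (fun t : ℝ => if t ≤ 1/2 then γ (2*t) else δ (2*t-1)) (γ ∘ fun t => 2*t)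
      (Icc 0 (1/2)) := by
    intro t ht
    simp only [if_pos ht.2, Function.comp]
  have e2 : EqOn (fun t : ℝ => if t ≤ 1/2 then γ (2*t) else δ (2*t-1)) (δ ∘ fun t => 2*t-1)
      (Icc (1/2) 1) := by
    intro t ht
    by_cases h : t ≤ 1/2
    · have : t = 1/2 := le_antisymm h ht.1
      subst this
      norm_num [h1, d0]
    · simp only [if_neg h, Function.comp]
  have m1 : MapsTo (fun t : ℝ => 2*t) (Icc 0 (1/2)) (Icc 0 1) := by
    intro t ht
    exact ⟨by linarith [ht.1], by linarith [ht.2]⟩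
  have m2 : MapsTo (fun t : ℝ => 2*t-1) (Icc (1/2) 1) (Icc 0 1) := by
    intro t ht
    exact ⟨by linarith [ht.1], by linarith [ht.2]⟩
  have hU : Icc (0:ℝ) 1 = Icc 0 (1/2) ∪ Icc (1/2) 1 :=
    (Icc_union_Icc_eq_Icc (by norm_num) (by norm_num)).symm
  refine ⟨fun t => if t ≤ 1/2 then γ (2*t) else δ (2*t-1), ?_, by simp [h0], ?_, ?_⟩
  · rw [hU]
    refine ContinuousOn.union_of_isClosed ?_ ?_ isClosed_Icc isClosed_Icc
    · exact (hc.comp (by fun_prop) m1).congr e1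
    · exact (dc.comp (by fun_prop) m2).congr e2
  · norm_num [d1]
  · unfold pathLength at *
    rw [hU, eVariationOn.union _ (x := (1/2 : ℝ)) (isGreatest_Icc (by norm_num))
      (isLeast_Icc (by norm_num)), eVariationOn.congr e1, eVariationOn.congr e2]
    refine add_le_add (le_trans ?_ hL) (le_trans ?_ dL)
    · apply eVariationOn.comp_le_of_monotoneOn _ _ _ m1
      intro a _ b _ hab
      simpa using hab
    · apply eVariationOn.comp_le_of_monotoneOn _ _ _ m2
      intro a _ b _ hab
      simpa using hab

lemma JoinedLen.mono {X : Type*} [MetricSpace X] {y z : X} {L M : ℝ≥0∞}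
    (h : JoinedLen y z L) (hLM : L ≤ M) : JoinedLen y z M := by
  obtain ⟨γ, hc, h0, h1, hL⟩ := h
  exact ⟨γ, hc, h0, h1, hL.trans hLM⟩

/-- Points of the same connected component are joined by a path of finite length. -/
lemma joinedLen_of_mem {X : Type*} [MetricSpace X] (hX : PropertyStar X) {p q : X}
    (h : q ∈ connectedComponent p) : ∃ L : ℝ≥0∞, L ≠ ⊤ ∧ JoinedLen p q L := by
  have hloc : ∀ a : X, ∃ ε > (0:ℝ), ∀ b ∈ ball a ε, ∃ L : ℝ≥0∞, L ≠ ⊤ ∧ JoinedLen a b L := by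
    intro a
    obtain ⟨ε, hε, C, hC, H⟩ := hX a
    exact ⟨ε, hε, fun b hb => ⟨_, ENNReal.ofReal_ne_top, H a (mem_ball_self hε) b hb⟩⟩
  have hclopen : IsClopen {q : X | ∃ L : ℝ≥0∞, L ≠ ⊤ ∧ JoinedLen p q L} := by
    constructor
    · rw [← isOpen_compl_iff, Metric.isOpen_iff]
      intro a ha
      obtain ⟨ε, hε, H⟩ := hloc a
      refine ⟨ε, hε, fun b hb hb' => ha ?_⟩
      obtain ⟨L, hL, hJ⟩ := H b hb
      obtain ⟨M, hM, hK⟩ := hb'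
      exact ⟨M + L, by simp [hL, hM], hK.trans hJ.symm⟩
    · rw [Metric.isOpen_iff]
      intro a ⟨M, hM, hK⟩
      obtain ⟨ε, hε, H⟩ := hloc a
      refine ⟨ε, hε, fun b hb => ?_⟩
      obtain ⟨L, hL, hJ⟩ := H b hb
      exact ⟨M + L, by simp [hL, hM], hK.trans hJ⟩
  refine hclopen.connectedComponent_subset ?_ h
  obtain ⟨ε, hε, H⟩ := hloc p
  exact H p (mem_ball_self hε)

lemma mem_component_of_path {X : Type*} [MetricSpace X] {γ : ℝ → X}
    (hc : ContinuousOn γ (Icc 0 1)) : MapsTo γ (Icc 0 1) (connectedComponent (γ 0)) := by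
  intro t ht
  exact (isPreconnected_Icc.image γ hc).subset_connectedComponent
    (mem_image_of_mem _ (by simp)) (mem_image_of_mem _ ht)

/-- Every compact metric space satisfying property (*) is locally quasiconvex. -/
theorem propertyStar_locQuasiconvex (X : Type*) [MetricSpace X] [CompactSpace X]
    (hX : PropertyStar X) : IsLocQuasiconvex X := by
  intro x
  have hN : connectedComponent x ∈ nhds x := by
    obtain ⟨ε, hε, C, hC, H⟩ := hX x
    refine Filter.mem_of_superset (ball_mem_nhds x hε) fun b hb => ?_
    obtain ⟨γ, hc, h0, h1, -⟩ := H x (mem_ball_self hε) b hb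
    have := mem_component_of_path hc (x := 1) (by simp)
    rwa [h0, h1] at this
  have hcomp : IsCompact (connectedComponent x ×ˢ connectedComponent x) :=
    isClosed_connectedComponent.isCompact.prod isClosed_connectedComponent.isCompact
  have key : ∃ C : ℝ, ∀ w ∈ connectedComponent x ×ˢ connectedComponent x,
      JoinedLen w.1 w.2 (ENNReal.ofReal (C * dist w.1 w.2)) := by
    refine hcomp.induction_on (p := fun S => ∃ C : ℝ, ∀ w ∈ S,
      JoinedLen w.1 w.2 (ENNReal.ofReal (C * dist w.1 w.2))) ⟨0, by simp⟩ ?_ ?_ ?_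
    · rintro s t hst ⟨C, hC⟩
      exact ⟨C, fun w hw => hC w (hst hw)⟩
    · rintro s t ⟨C, hC⟩ ⟨D, hD⟩
      refine ⟨max C D, ?_⟩
      rintro w (hw | hw)
      · exact (hC w hw).mono (ENNReal.ofReal_le_ofReal
          (mul_le_mul_of_nonneg_right (le_max_left _ _) dist_nonneg))
      · exact (hD w hw).mono (ENNReal.ofReal_le_ofReal
          (mul_le_mul_of_nonneg_right (le_max_right _ _) dist_nonneg))
    · rintro ⟨p, q⟩ ⟨hp, hq⟩
      obtain ⟨ε, hε, C, hC, H⟩ := hX p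
      obtain ⟨η, hη, D, hD, K⟩ := hX q
      by_cases hpq : p = q
      · subst hpq
        refine ⟨ball p ε ×ˢ ball p ε, mem_nhdsWithin_of_mem_nhds
          (prod_mem_nhds (ball_mem_nhds p hε) (ball_mem_nhds p hε)), C, ?_⟩
        rintro ⟨y, z⟩ ⟨hy, hz⟩
        exact H y hy z hz
      · have hd : 0 < dist p q := dist_pos.2 hpq
        have hqp : q ∈ connectedComponent p := by
          rw [← connectedComponent_eq hp]; exact hq
        obtain ⟨L, hL, hJ⟩ := joinedLen_of_mem hX hqp
        set r := min ε (dist p q / 4) with hr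
        set s := min η (dist p q / 4) with hs
        have hr0 : 0 < r := lt_min hε (by positivity)
        have hs0 : 0 < s := lt_min hη (by positivity)
        refine ⟨ball p r ×ˢ ball q s, mem_nhdsWithin_of_mem_nhds
          (prod_mem_nhds (ball_mem_nhds p hr0) (ball_mem_nhds q hs0)),
          (C * ε + L.toReal + D * η) / (dist p q / 2), ?_⟩
        rintro ⟨y, z⟩ ⟨hy, hz⟩
        simp only [mem_ball] at hy hz
        have hy1 := hy.trans_le (min_le_left _ _)
        have hy2 := hy.trans_le (min_le_right _ _)
        have hz1 := hz.trans_le (min_le_left _ _)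
        have hz2 := hz.trans_le (min_le_right _ _)
        have J1 : JoinedLen y p (ENNReal.ofReal (C * dist y p)) := H y hy1 p (mem_ball_self hε)
        have J2 : JoinedLen z q (ENNReal.ofReal (D * dist z q)) := K z hz1 q (mem_ball_self hη)
        refine ((J1.trans hJ).trans J2.symm).mono ?_
        have hC0 : 0 ≤ C := by linarith
        have hD0 : 0 ≤ D := by linarith
        have hL0 : 0 ≤ L.toReal := ENNReal.toReal_nonneg
        rw [← ENNReal.ofReal_toReal hL, ← ENNReal.ofReal_add (by positivity) hL0,
          ← ENNReal.ofReal_add (by positivity) (by positivity),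
          ENNReal.toReal_ofReal hL0]
        apply ENNReal.ofReal_le_ofReal
        have hyz : dist p q / 2 ≤ dist y z := by
          have := dist_triangle4 p y z q
          rw [dist_comm p y] at this
          linarith
        have a1 : C * dist y p ≤ C * ε := mul_le_mul_of_nonneg_left hy1.le hC0
        have a2 : D * dist z q ≤ D * η := mul_le_mul_of_nonneg_left hz1.le hD0
        calc C * dist y p + L.toReal + D * dist z q ≤ C * ε + L.toReal + D * η := by linarith
          _ = (C * ε + L.toReal + D * η) / (dist p q / 2) * (dist p q / 2) := by
            field_simp
          _ ≤ _ := mul_le_mul_of_nonneg_left hyz (by positivity)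
  obtain ⟨C, hC⟩ := key
  refine ⟨connectedComponent x, hN, C, fun y hy z hz => ?_⟩
  obtain ⟨γ, hc, h0, h1, hL⟩ := hC (y, z) ⟨hy, hz⟩
  refine ⟨γ, hc, h0, h1, ?_, hL⟩
  have := mem_component_of_path hc
  rwa [h0, ← connectedComponent_eq hy] at this
end

section
/- Let E be a real normed vector space and ω: E × E → ℝ a bilinear map satisfying |ω(a,b)| ≤ ‖a‖·‖b‖ for all a, b ∈ E. Let γ: [0,2π] → E be a continuously differentiable loop, i.e. γ(0) = γ(2π). Then |∫₀^{2π} ω(γ(φ), γ'(φ)) dφ| ≤ ( ∫₀^{2π} ‖γ'(φ)‖ dφ )². -/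
open Set Real
open scoped ENNReal

/-- Isoperimetric-type inequality for loops: if `ω : E × E → ℝ` is bilinear with
`|ω(a,b)| ≤ ‖a‖·‖b‖`, and `γ : [0,2π] → E` is a continuously differentiable loop
(`γ(0) = γ(2π)`), then `|∫₀^{2π} ω(γ(φ), γ'(φ)) dφ| ≤ (∫₀^{2π} ‖γ'(φ)‖ dφ)²`. -/
theorem loop_action_isoperimetric
    {E : Type*} [NormedAddCommGroup E] [NormedSpace ℝ E]
    (ω : E →ₗ[ℝ] E →ₗ[ℝ] ℝ) (hω : ∀ a b : E, |ω a b| ≤ ‖a‖ * ‖b‖)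
    (γ γ' : ℝ → E)
    (hderiv : ∀ φ ∈ Set.Icc (0:ℝ) (2 * π),
      HasDerivWithinAt γ (γ' φ) (Set.Icc 0 (2 * π)) φ)
    (hcont : ContinuousOn γ' (Set.Icc 0 (2 * π)))
    (hloop : γ 0 = γ (2 * π)) :
    |∫ φ in (0:ℝ)..(2 * π), ω (γ φ) (γ' φ)| ≤
      (∫ φ in (0:ℝ)..(2 * π), ‖γ' φ‖) ^ 2 := by
  have hpi : (0:ℝ) ≤ 2 * π := by positivity
  have hγc : ContinuousOn γ (Set.Icc 0 (2 * π)) := fun x hx => (hderiv x hx).continuousWithinAt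
  let W : E →L[ℝ] E →L[ℝ] ℝ := ω.mkContinuous₂ 1 (by
    intro a b
    simpa using hω a b)
  have hW : ∀ a b, ω a b = W a b := fun a b => rfl
  -- continuous extension of the speed
  let g : ℝ → ℝ := Set.IccExtend hpi (fun x : Set.Icc (0:ℝ) (2 * π) => ‖γ' x‖)
  have hg : Continuous g := by
    apply Continuous.Icc_extend'
    exact (continuousOn_iff_continuous_domRestrict.mp hcont).norm
  have hgeq : ∀ x ∈ Set.Icc (0:ℝ) (2 * π), g x = ‖γ' x‖ := fun x hx =>
    Set.IccExtend_of_mem hpi _ hx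
  have hg0 : ∀ x, 0 ≤ g x := fun x => norm_nonneg _
  let B : ℝ → ℝ := fun x => ∫ t in (0:ℝ)..x, g t
  have hB : ∀ x, HasDerivAt B (g x) x := fun x => hg.integral_hasStrictDerivAt 0 x |>.hasDerivAt
  have hlen : ∫ φ in (0:ℝ)..(2 * π), ‖γ' φ‖ = B (2 * π) := by
    apply intervalIntegral.integral_congr
    intro x hx
    rw [Set.uIcc_of_le hpi] at hx
    exact (hgeq x hx).symm
  have hmono : Monotone B := monotone_of_hasDerivAt_nonneg hB hg0
  have hdist : ∀ x ∈ Set.Icc (0:ℝ) (2 * π), ‖γ x - γ 0‖ ≤ B (2 * π) := by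
    intro x hx
    refine le_trans ?_ (hmono hx.2)
    refine image_norm_le_of_norm_deriv_right_le_deriv_boundary (f := fun x => γ x - γ 0)
      (f' := γ') (B := B) (B' := g) (a := 0) (b := 2 * π)
      (hγc.sub continuousOn_const) ?_ ?_ hB ?_ hx
    · intro y hy
      exact ((hderiv y ⟨hy.1, hy.2.le⟩).mono_of_mem_nhdsWithin
        (Icc_mem_nhdsGE_of_mem hy)).sub_const _
    · simp [B]
    · intro y hy
      exact (hgeq y ⟨hy.1, hy.2.le⟩).ge
  have hi1 : IntervalIntegrable (fun φ => W (γ φ) (γ' φ)) MeasureTheory.volume 0 (2 * π) := by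
    apply ContinuousOn.intervalIntegrable
    rw [Set.uIcc_of_le hpi]
    fun_prop
  have hi2 : IntervalIntegrable (fun φ => W (γ 0) (γ' φ)) MeasureTheory.volume 0 (2 * π) := by
    apply ContinuousOn.intervalIntegrable
    rw [Set.uIcc_of_le hpi]
    fun_prop
  have hz : ∫ φ in (0:ℝ)..(2 * π), W (γ 0) (γ' φ) = 0 := by
    rw [intervalIntegral.integral_eq_sub_of_hasDerivAt_of_le (f := fun φ => W (γ 0) (γ φ)) hpi
      (by fun_prop) _ hi2]
    · simp [← hloop]
    · intro x hx
      exact (W (γ 0)).hasFDerivAt.comp_hasDerivAt x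
        ((hderiv x ⟨hx.1.le, hx.2.le⟩).hasDerivAt (Icc_mem_nhds hx.1 hx.2))
  have hkey : ∫ φ in (0:ℝ)..(2 * π), ω (γ φ) (γ' φ)
      = ∫ φ in (0:ℝ)..(2 * π), ω (γ φ - γ 0) (γ' φ) := by
    have := intervalIntegral.integral_sub hi1 hi2
    rw [hz, sub_zero] at this
    simp only [hW, map_sub, sub_apply]
    exact this.symm
  rw [hkey, hlen, ← Real.norm_eq_abs]
  have h1 : ‖∫ φ in (0:ℝ)..(2 * π), ω (γ φ - γ 0) (γ' φ)‖
      ≤ ∫ φ in (0:ℝ)..(2 * π), B (2 * π) * g φ := by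
    apply intervalIntegral.norm_integral_le_of_norm_le hpi
    · refine Filter.Eventually.of_forall fun x hx => ?_
      have hx' : x ∈ Set.Icc (0:ℝ) (2 * π) := ⟨hx.1.le, hx.2⟩
      rw [hgeq x hx', Real.norm_eq_abs]
      exact (hω _ _).trans (mul_le_mul_of_nonneg_right (hdist x hx') (norm_nonneg _))
    · exact (continuous_const.mul hg).intervalIntegrable _ _
  rw [intervalIntegral.integral_const_mul] at h1
  rw [sq]
  exact h1
end

section
/- Let E be a real normed vector space and ω: E × E → ℝ a continuous bilinear map that is antisymmetric, ω(a,b) = −ω(b,a). Let B: [0,1] × ℝ → E be twice continuously differentiable and 2π-periodic in the second variable, B(s, φ + 2π) = B(s, φ), and suppose ω(∂_φ B(s,φ), ∂_s B(s,φ)) = 0 for all (s,φ). Then the function s ↦ ∫₀^{2π} ω(B(s,φ), ∂_φ B(s,φ)) dφ is constant on [0,1]; in particular ∫₀^{2π} ω(B(1,φ), ∂_φ B(1,φ)) dφ = ∫₀^{2π} ω(B(0,φ), ∂_φ B(0,φ)) dφ. -/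
open Set Real
open scoped ENNReal

theorem aux_hasDerivAt_integral (K K' : ℝ × ℝ → ℝ) (hK : Continuous K) (hK' : Continuous K')
    (hd : ∀ s φ, HasDerivAt (fun σ => K (σ, φ)) (K' (s, φ)) s) (a b s : ℝ) :
    HasDerivAt (fun σ => ∫ φ in a..b, K (σ, φ)) (∫ φ in a..b, K' (s, φ)) s := by
  obtain ⟨C, hC⟩ := ((isCompact_Icc (a := s - 1) (b := s + 1)).prod
    (isCompact_uIcc (a := a) (b := b))).exists_bound_of_continuousOn hK'.continuousOn
  refine (intervalIntegral.hasDerivAt_integral_of_dominated_loc_of_deriv_le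
    (F := fun σ φ => K (σ, φ)) (F' := fun σ φ => K' (σ, φ)) (bound := fun _ => C)
    (s := Icc (s - 1) (s + 1)) (Icc_mem_nhds (by linarith) (by linarith)) ?_ ?_ ?_ ?_ ?_ ?_).2
  · exact Filter.Eventually.of_forall fun σ =>
      (by fun_prop : Continuous fun φ => K (σ, φ)).aestronglyMeasurable
  · exact (by fun_prop : Continuous fun φ => K (s, φ)).intervalIntegrable _ _
  · exact (by fun_prop : Continuous fun φ => K' (s, φ)).aestronglyMeasurable
  · exact Filter.Eventually.of_forall fun t ht x hx => hC (x, t) ⟨hx, uIoc_subset_uIcc ht⟩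
  · exact intervalIntegrable_const
  · exact Filter.Eventually.of_forall fun t _ x _ => hd x t

/-- Homotopy invariance of the Chern-Simons functional, abstracted to a normed space: let
`ω : E × E → ℝ` be a continuous antisymmetric bilinear map and `B : [0,1] × ℝ → E` a twice
continuously differentiable family, `2π`-periodic in the second variable, such that
`ω(∂_φ B(s,φ), ∂_s B(s,φ)) = 0` for all `(s,φ)`. Then
`s ↦ ∫₀^{2π} ω(B(s,φ), ∂_φ B(s,φ)) dφ` is constant on `[0,1]`; in particular its values at
`s = 1` and `s = 0` agree. -/
theorem chernSimons_homotopy_invariance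
    {E : Type*} [NormedAddCommGroup E] [NormedSpace ℝ E]
    (ω : E →L[ℝ] E →L[ℝ] ℝ) (hanti : ∀ a b : E, ω a b = - ω b a)
    (B : ℝ → ℝ → E) (hB : ContDiff ℝ 2 (Function.uncurry B))
    (hper : ∀ s ∈ Set.Icc (0:ℝ) 1, ∀ φ : ℝ, B s (φ + 2 * π) = B s φ)
    (hlag : ∀ s ∈ Set.Icc (0:ℝ) 1, ∀ φ : ℝ,
      ω (deriv (fun ψ => B s ψ) φ) (deriv (fun σ => B σ φ) s) = 0) :
    (∀ s ∈ Set.Icc (0:ℝ) 1, ∀ s' ∈ Set.Icc (0:ℝ) 1,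
      (∫ φ in (0:ℝ)..(2 * π), ω (B s φ) (deriv (fun ψ => B s ψ) φ)) =
        ∫ φ in (0:ℝ)..(2 * π), ω (B s' φ) (deriv (fun ψ => B s' ψ) φ)) ∧
    (∫ φ in (0:ℝ)..(2 * π), ω (B 1 φ) (deriv (fun ψ => B 1 ψ) φ)) =
      ∫ φ in (0:ℝ)..(2 * π), ω (B 0 φ) (deriv (fun ψ => B 0 ψ) φ) := by
  have hdiff : Differentiable ℝ (Function.uncurry B) := hB.differentiable (by norm_num)
  have hG : ContDiff ℝ 1 (fderiv ℝ (Function.uncurry B)) := hB.fderiv_right (by norm_num)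
  have hGd : Differentiable ℝ (fderiv ℝ (Function.uncurry B)) := hG.differentiable (by norm_num)
  have hGc : Continuous (fderiv ℝ (Function.uncurry B)) := hG.continuous
  have hHc : Continuous (fderiv ℝ (fderiv ℝ (Function.uncurry B))) :=
    hG.continuous_fderiv (by norm_num)
  have hBc : Continuous (Function.uncurry B) := hB.continuous
  have hsymm : ∀ p, IsSymmSndFDerivAt ℝ (Function.uncurry B) p := fun p =>
    hB.contDiffAt.isSymmSndFDerivAt (by simp)
  set G := fderiv ℝ (Function.uncurry B) with hGdef
  have l1 : ∀ s φ : ℝ, HasDerivAt (fun σ : ℝ => (σ, φ)) ((1 : ℝ), (0 : ℝ)) s := fun s φ =>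
    (hasDerivAt_id s).prodMk (hasDerivAt_const s φ)
  have l2 : ∀ s φ : ℝ, HasDerivAt (fun ψ : ℝ => (s, ψ)) ((0 : ℝ), (1 : ℝ)) φ := fun s φ =>
    (hasDerivAt_const φ s).prodMk (hasDerivAt_id φ)
  have hBs : ∀ s φ, HasDerivAt (fun σ => B σ φ) (G (s, φ) (1, 0)) s := by
    intro s φ
    have h := (hdiff (s, φ)).hasFDerivAt.comp_hasDerivAt s (l1 s φ)
    exact h
  have hBφ : ∀ s φ, HasDerivAt (fun ψ => B s ψ) (G (s, φ) (0, 1)) φ := by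
    intro s φ
    have h := (hdiff (s, φ)).hasFDerivAt.comp_hasDerivAt φ (l2 s φ)
    exact h
  have hGs : ∀ s φ, HasDerivAt (fun σ => G (σ, φ)) (fderiv ℝ G (s, φ) (1, 0)) s := by
    intro s φ
    have h := (hGd (s, φ)).hasFDerivAt.comp_hasDerivAt s (l1 s φ)
    exact h
  have hGφ : ∀ s φ, HasDerivAt (fun ψ => G (s, ψ)) (fderiv ℝ G (s, φ) (0, 1)) φ := by
    intro s φ
    have h := (hGd (s, φ)).hasFDerivAt.comp_hasDerivAt φ (l2 s φ)
    exact h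
  simp only [(hBs _ _).deriv, (hBφ _ _).deriv] at hlag ⊢
  have key : ∀ s, HasDerivAt (fun σ => ∫ φ in (0:ℝ)..(2 * π), ω (B σ φ) (G (σ, φ) (0, 1)))
      (∫ φ in (0:ℝ)..(2 * π), (ω (G (s, φ) (1, 0)) (G (s, φ) (0, 1)) +
        ω (B s φ) (fderiv ℝ G (s, φ) (1, 0) (0, 1)))) s := by
    intro s
    refine aux_hasDerivAt_integral (fun p => ω (Function.uncurry B p) (G p (0, 1)))
      (fun p => ω (G p (1, 0)) (G p (0, 1)) + ω (Function.uncurry B p)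
        (fderiv ℝ G p (1, 0) (0, 1))) (by fun_prop) (by fun_prop) ?_ 0 (2 * π) s
    intro s φ
    have h1 := ω.hasFDerivAt.comp_hasDerivAt s (hBs s φ)
    have h2 := (hGs s φ).clm_apply (hasDerivAt_const s ((0 : ℝ), (1 : ℝ)))
    simpa using h1.clm_apply h2
  have hper' : ∀ s ∈ Icc (0:ℝ) 1, G (s, 2 * π) (1, 0) = G (s, 0) (1, 0) := by
    intro s hs
    have hu := uniqueDiffOn_Icc (zero_lt_one (α := ℝ)) s hs
    refine hu.eq_deriv _ ((hBs s (2 * π)).hasDerivWithinAt (s := Icc 0 1)) ?_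
    refine ((hBs s 0).hasDerivWithinAt (s := Icc 0 1)).congr_of_mem (fun x hx => ?_) hs
    simpa using hper x hx 0
  have hzero : ∀ s ∈ Icc (0:ℝ) 1, (∫ φ in (0:ℝ)..(2 * π),
      (ω (G (s, φ) (1, 0)) (G (s, φ) (0, 1)) +
        ω (B s φ) (fderiv ℝ G (s, φ) (1, 0) (0, 1)))) = 0 := by
    intro s hs
    have hBs' : Continuous (B s) := hBc.comp (by fun_prop : Continuous fun φ : ℝ => (s, φ))
    rw [intervalIntegral.integral_eq_sub_of_hasDerivAt
      (f := fun φ => ω (B s φ) (G (s, φ) (1, 0)))]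
    · have := hper s hs 0
      rw [zero_add] at this
      rw [hper' s hs, this, sub_self]
    · intro φ _
      have h1 := ω.hasFDerivAt.comp_hasDerivAt φ (hBφ s φ)
      have h2 := (hGφ s φ).clm_apply (hasDerivAt_const φ ((1 : ℝ), (0 : ℝ)))
      have h3 := h1.clm_apply h2
      have h4 := hsymm (s, φ) (1, 0) (0, 1)
      rw [← hGdef] at h4
      have h5 := hanti (G (s, φ) (1, 0)) (G (s, φ) (0, 1))
      rw [hlag s hs φ] at h5
      rw [h5, h4]
      simpa [hlag s hs φ] using h3
    · exact Continuous.intervalIntegrable (by fun_prop) _ _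
  have hconst := constant_of_has_deriv_right_zero (a := 0) (b := 1)
    (fun s _ => (key s).continuousAt.continuousWithinAt)
    (fun s hs => by
      have := key s
      rw [hzero s (Ico_subset_Icc_self hs)] at this
      exact this.hasDerivWithinAt)
  exact ⟨fun s hs s' hs' => (hconst s hs).trans (hconst s' hs').symm,
    hconst 1 (by simp)⟩
end
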